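/- arXiv:2512.16894 — 2 statements merged into one kernel-verified Lean document; each statement's English description precedes it below -/
import Mathlib

section
/- Let γ > 0 and let Θ be a σ-finite Borel measure on the space ℝ≥0^ℕ of nonnegative sequences. Let Ξ be the pushforward of the product measure ν_γ ⊗ Θ under the map (y₀, y) ↦ (y₀, (1 − y₀)·y) (scalar multiplication of the sequence y), a measure on [0,1) × ℝ≥0^ℕ. For x > 0 define G^M_x(y₀, z) := ( m_x(y₀), ((1 − m_x(y₀))/(1 − y₀))·z ) for y₀ ∈ [0,1). Then: (i) for every x > 0, the pushforward of Ξ under G^M_x equals x^{−γ}·Ξ; (ii) for every point (y₀, z) with y₀ ∈ [0,1), the map x ↦ x·G^M_x(y₀, z) is coordinate-wise nondecreasing on (0, ∞); in particular x·G^M_x(y₀, z) ≤ (y₀, z) coordinate-wise for x ∈ (0,1]. -/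
open MeasureTheory Set

/-- The magic function `m_x(y) = x·y/(x·y + (1 − y))`. -/
noncomputable def magic (x y : ℝ) : ℝ := x * y / (x * y + (1 - y))

/-- The measure `ν_γ` on `[0,1)` with density `y^{γ−1}·(1 − y)^{−1−γ}`. -/
noncomputable def nuGamma (γ : ℝ) : Measure ℝ :=
  (volume.restrict (Ico 0 1)).withDensity fun y =>
    ENNReal.ofReal (y ^ (γ - 1) * (1 - y) ^ (-1 - γ))

/-!
In the odds `y / (1 - y)` the magic function is multiplication by `x` and `ν_γ` is
`r ^ (γ - 1) dr`, which a dilation by `x` rescales by `x ^ (-γ)`. Since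
`1 - m_x(y) = (1 - y) / (x * y + (1 - y))`, the map `(y₀, y) ↦ (y₀, (1 - y₀) • y)` conjugates
`m_x × id` to `G^M_x`, so that `Ξ` inherits the scaling of `ν_γ`; and
`x • G^M_x(y₀, z) = x / (x * y₀ + (1 - y₀)) • (x * y₀, z)` with a scalar nondecreasing in `x`.
-/

theorem map_withDensity_abs_deriv_mul {s : Set ℝ} {f f' : ℝ → ℝ} (hs : MeasurableSet s)
    (hf' : ∀ y ∈ s, HasDerivWithinAt f (f' y) s y) (hinj : InjOn f s) (hf : Measurable f)
    (g : ℝ → ENNReal) :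
    ((volume.restrict s).withDensity fun y => ENNReal.ofReal |f' y| * g (f y)).map f =
      (volume.restrict (f '' s)).withDensity g := by
  ext t ht
  rw [Measure.map_apply hf ht, withDensity_apply _ (hf ht), withDensity_apply _ ht,
    ← lintegral_indicator (hf ht), ← lintegral_indicator ht,
    lintegral_image_eq_lintegral_abs_deriv_mul hs hf' hinj]
  refine lintegral_congr fun y => ?_
  by_cases hy : f y ∈ t <;> simp [indicator, hy]

section Magic

variable {γ x x' y : ℝ}

theorem magic_denom_pos (hx : 0 < x) (hy : y ∈ Icc 0 1) : 0 < x * y + (1 - y) := by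
  rcases hy.1.eq_or_lt with rfl | hy₀
  · simp
  · exact add_pos_of_pos_of_nonneg (mul_pos hx hy₀) (sub_nonneg.2 hy.2)

theorem one_sub_magic (h : x * y + (1 - y) ≠ 0) :
    1 - magic x y = (1 - y) / (x * y + (1 - y)) := by
  rw [magic, one_sub_div h, add_sub_cancel_left]

@[simp]
theorem magic_one (y : ℝ) : magic 1 y = y := by
  simp [magic]

theorem magic_magic (h : x' * y + (1 - y) ≠ 0) : magic x (magic x' y) = magic (x * x') y := by
  rw [magic, one_sub_magic h, magic, mul_div_assoc', ← add_div, div_div_div_cancel_right₀ h,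
    ← mul_assoc, magic]

theorem magic_div_one_sub_magic (h : x * y + (1 - y) ≠ 0) :
    magic x y / (1 - magic x y) = x * (y / (1 - y)) := by
  rw [one_sub_magic h, magic, div_div_div_cancel_right₀ h, mul_div_assoc]

theorem mapsTo_magic_Ico (hx : 0 < x) : MapsTo (magic x) (Ico 0 1) (Ico 0 1) := by
  intro y hy
  have hD := magic_denom_pos hx (Ico_subset_Icc_self hy)
  refine ⟨div_nonneg (mul_nonneg hx.le hy.1) hD.le, sub_pos.1 ?_⟩
  rw [one_sub_magic hD.ne']
  exact div_pos (sub_pos.2 hy.2) hD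

theorem leftInvOn_magic_inv (hx : 0 < x) : LeftInvOn (magic x⁻¹) (magic x) (Icc 0 1) := by
  intro y hy
  rw [magic_magic (magic_denom_pos hx hy).ne', inv_mul_cancel₀ hx.ne', magic_one]

theorem bijOn_magic_Ico (hx : 0 < x) : BijOn (magic x) (Ico 0 1) (Ico 0 1) := by
  have hinv := inv_pos.2 hx
  refine InvOn.bijOn ⟨(leftInvOn_magic_inv hx).mono Ico_subset_Icc_self, ?_⟩
    (mapsTo_magic_Ico hx) (mapsTo_magic_Ico hinv)
  simpa only [inv_inv] using (leftInvOn_magic_inv hinv).mono Ico_subset_Icc_self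

theorem hasDerivAt_magic (h : x * y + (1 - y) ≠ 0) :
    HasDerivAt (magic x) (x / (x * y + (1 - y)) ^ 2) y := by
  have hnum : HasDerivAt (fun y => x * y) x y := hasDerivAt_const_mul x
  have hden : HasDerivAt (fun y => x * y + (1 - y)) (x + -1) y :=
    hnum.add ((hasDerivAt_id y).const_sub 1)
  exact (hnum.div hden h).congr_deriv (by ring)

@[fun_prop]
theorem measurable_magic (x : ℝ) : Measurable (magic x) := by
  unfold magic
  fun_prop

theorem rpow_mul_one_sub_rpow_eq (hy : y ∈ Ico 0 1) :
    y ^ (γ - 1) * (1 - y) ^ (-1 - γ) = (y / (1 - y)) ^ (γ - 1) / (1 - y) ^ 2 := by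
  have h : 0 < 1 - y := sub_pos.2 hy.2
  rw [show -1 - γ = -(γ - 1) - 2 by ring, Real.rpow_sub h, Real.rpow_neg h.le, Real.rpow_two,
    Real.div_rpow hy.1 h.le]
  ring

theorem deriv_mul_nuGamma_density_magic (hx : 0 < x) (hy : y ∈ Ico 0 1) :
    x / (x * y + (1 - y)) ^ 2 * (magic x y ^ (γ - 1) * (1 - magic x y) ^ (-1 - γ)) =
      x ^ γ * (y ^ (γ - 1) * (1 - y) ^ (-1 - γ)) := by
  have hD := (magic_denom_pos hx (Ico_subset_Icc_self hy)).ne'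
  have h : 0 < 1 - y := sub_pos.2 hy.2
  rw [rpow_mul_one_sub_rpow_eq (mapsTo_magic_Ico hx hy), rpow_mul_one_sub_rpow_eq hy,
    magic_div_one_sub_magic hD, one_sub_magic hD, Real.mul_rpow hx.le (div_nonneg hy.1 h.le),
    Real.rpow_sub_one hx.ne']
  field_simp

theorem monotoneOn_div_magic_denom (hy : y ∈ Icc 0 1) :
    MonotoneOn (fun x => x / (x * y + (1 - y))) (Ioi 0) := by
  intro a ha b hb hab
  rw [div_le_div_iff₀ (magic_denom_pos ha hy) (magic_denom_pos hb hy)]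
  linarith [mul_le_mul_of_nonneg_right hab (sub_nonneg.2 hy.2)]

end Magic

section NuGamma

variable (γ : ℝ)

instance sigmaFinite_nuGamma : SigmaFinite (nuGamma γ) :=
  SigmaFinite.withDensity_ofReal _

theorem ae_nuGamma_mem_Ico : ∀ᵐ y ∂nuGamma γ, y ∈ Ico 0 1 :=
  (withDensity_absolutelyContinuous _ _).ae_le (ae_restrict_mem measurableSet_Ico)

theorem map_magic_nuGamma {x : ℝ} (hx : 0 < x) :
    (nuGamma γ).map (magic x) = ENNReal.ofReal (x ^ (-γ)) • nuGamma γ := by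
  let ρ : ℝ → ENNReal := fun y => ENNReal.ofReal (y ^ (γ - 1) * (1 - y) ^ (-1 - γ))
  let J : ℝ → ℝ := fun y => x / (x * y + (1 - y)) ^ 2
  have hD {y : ℝ} (hy : y ∈ Ico 0 1) := magic_denom_pos hx (Ico_subset_Icc_self hy)
  have hρ {y : ℝ} (hy : y ∈ Ico 0 1) :
      ρ y = ENNReal.ofReal (x ^ (-γ)) * (ENNReal.ofReal |J y| * ρ (magic x y)) := by
    have hJ : 0 < J y := div_pos hx (pow_pos (hD hy) 2)
    rw [abs_of_pos hJ, ← ENNReal.ofReal_mul hJ.le, deriv_mul_nuGamma_density_magic hx hy,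
      ← ENNReal.ofReal_mul (by positivity), ← mul_assoc, ← Real.rpow_add hx, neg_add_cancel,
      Real.rpow_zero, one_mul]
  have hν : nuGamma γ = ENNReal.ofReal (x ^ (-γ)) •
      (volume.restrict (Ico 0 1)).withDensity fun y => ENNReal.ofReal |J y| * ρ (magic x y) := by
    rw [← withDensity_smul' _ _ ENNReal.ofReal_ne_top]
    exact withDensity_congr_ae ((ae_restrict_mem measurableSet_Ico).mono fun y hy => hρ hy)
  have hbij := bijOn_magic_Ico hx
  calc (nuGamma γ).map (magic x)
      = ENNReal.ofReal (x ^ (-γ)) • ((volume.restrict (Ico 0 1)).withDensity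
          fun y => ENNReal.ofReal |J y| * ρ (magic x y)).map (magic x) := by
        rw [hν, Measure.map_smul]
    _ = ENNReal.ofReal (x ^ (-γ)) • nuGamma γ := by
        rw [map_withDensity_abs_deriv_mul measurableSet_Ico
          (fun y hy => (hasDerivAt_magic (hD hy).ne').hasDerivWithinAt) hbij.injOn
          (measurable_magic x), hbij.image_eq, nuGamma]

end NuGamma

section MassGrowth

variable {E : Type*} [MulAction ℝ E]

/-- The map `(y₀, y) ↦ (y₀, (1 - y₀) • y)` whose pushforward turns `ν_γ ⊗ Θ` into a splitting
measure of mass form. The space `E` stands for the sequences. -/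
def scaleRemainder (p : ℝ × E) : ℝ × E := (p.1, (1 - p.1) • p.2)

/-- The growth map `G^M_x`, on a general space `E` in place of the sequences. It is meaningful
for `p.1 ∈ [0, 1)` only: at `p.1 = 1` the division by zero makes the scalar `0`. -/
noncomputable def massGrowth (x : ℝ) (p : ℝ × E) : ℝ × E :=
  (magic x p.1, ((1 - magic x p.1) / (1 - p.1)) • p.2)

theorem massGrowth_scaleRemainder (x : ℝ) {p : ℝ × E} (hp : p.1 ≠ 1) :
    massGrowth x (scaleRemainder p) = scaleRemainder (Prod.map (magic x) id p) := by
  simp only [massGrowth, scaleRemainder, Prod.map_fst, Prod.map_snd, id, smul_smul,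
    div_mul_cancel₀ _ (sub_ne_zero.2 hp.symm)]

theorem massGrowth_one {p : ℝ × E} (hp : p.1 ≠ 1) : massGrowth 1 p = p := by
  simp [massGrowth, div_self (sub_ne_zero.2 hp.symm)]

theorem smul_massGrowth {x : ℝ} {p : ℝ × E} (hp : p.1 ≠ 1) (h : x * p.1 + (1 - p.1) ≠ 0) :
    x • massGrowth x p = (x / (x * p.1 + (1 - p.1))) • (x * p.1, p.2) := by
  have hp' : 1 - p.1 ≠ 0 := sub_ne_zero.2 hp.symm
  rw [massGrowth, one_sub_magic h, div_div_cancel_left' hp', Prod.smul_mk, Prod.smul_mk,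
    smul_smul, ← div_eq_mul_inv, magic, smul_eq_mul, smul_eq_mul, mul_div_assoc',
    div_mul_eq_mul_div]

section Measure

variable [MeasurableSpace E] [MeasurableSMul₂ ℝ E]

@[fun_prop]
theorem measurable_scaleRemainder : Measurable (scaleRemainder : ℝ × E → ℝ × E) := by
  unfold scaleRemainder
  fun_prop

@[fun_prop]
theorem measurable_massGrowth (x : ℝ) : Measurable (massGrowth x : ℝ × E → ℝ × E) := by
  unfold massGrowth
  fun_prop

/-- The splitting measure of mass form `M_γ` with remainder law `Θ`, written `Ξ` in
the paper. -/
noncomputable def massFormMeasure (γ : ℝ) (Θ : Measure E) : Measure (ℝ × E) :=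
  ((nuGamma γ).prod Θ).map scaleRemainder

theorem map_massGrowth_massFormMeasure (γ : ℝ) (Θ : Measure E) [SFinite Θ] {x : ℝ} (hx : 0 < x) :
    (massFormMeasure γ Θ).map (massGrowth x) =
      ENNReal.ofReal (x ^ (-γ)) • massFormMeasure γ Θ := by
  have hconj : massGrowth x ∘ scaleRemainder =ᵐ[(nuGamma γ).prod Θ]
      scaleRemainder ∘ Prod.map (magic x) id :=
    (Measure.quasiMeasurePreserving_fst.ae (ae_nuGamma_mem_Ico γ)).mono fun p hp =>
      massGrowth_scaleRemainder x hp.2.ne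
  have hprod : ((nuGamma γ).prod Θ).map (Prod.map (magic x) id) =
      ENNReal.ofReal (x ^ (-γ)) • (nuGamma γ).prod Θ := by
    rw [← Measure.map_prod_map _ _ (measurable_magic x) measurable_id, map_magic_nuGamma γ hx,
      Measure.map_id, Measure.prod_smul_left]
  rw [massFormMeasure, Measure.map_map (by fun_prop) (by fun_prop), Measure.map_congr hconj,
    ← Measure.map_map (by fun_prop) (by fun_prop), hprod, Measure.map_smul]

end Measure

section Order

variable [Zero E] [Preorder E] [SMulPosMono ℝ E] {p : ℝ × E}

theorem monotoneOn_smul_massGrowth (hp₁ : p.1 ∈ Ico 0 1) (hp₂ : 0 ≤ p.2) :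
    MonotoneOn (fun x : ℝ => x • massGrowth x p) (Ioi 0) := by
  intro a (ha : 0 < a) b (hb : 0 < b) hab
  have hp₁' := Ico_subset_Icc_self hp₁
  have hDa := magic_denom_pos ha hp₁'
  have hDb := magic_denom_pos hb hp₁'
  have hscale := monotoneOn_div_magic_denom hp₁' ha hb hab
  simp only [smul_massGrowth hp₁.2.ne hDa.ne', smul_massGrowth hp₁.2.ne hDb.ne']
  exact ⟨mul_le_mul hscale (mul_le_mul_of_nonneg_right hab hp₁.1) (mul_nonneg ha.le hp₁.1)
    (div_pos hb hDb).le, smul_le_smul_of_nonneg_right hscale hp₂⟩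

theorem smul_massGrowth_le {x : ℝ} (hx : x ∈ Ioc 0 1) (hp₁ : p.1 ∈ Ico 0 1) (hp₂ : 0 ≤ p.2) :
    x • massGrowth x p ≤ p := by
  simpa [massGrowth_one hp₁.2.ne] using
    monotoneOn_smul_massGrowth hp₁ hp₂ hx.1 (mem_Ioi.2 one_pos) hx.2

end Order

theorem massForm_is_GM_growing_general [MeasurableSpace E] [MeasurableSMul₂ ℝ E] [Zero E]
    [Preorder E] [SMulPosMono ℝ E] (γ : ℝ) (Θ : Measure E) [SFinite Θ] :
    (∀ x > (0 : ℝ), (massFormMeasure γ Θ).map (massGrowth x) =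
      ENNReal.ofReal (x ^ (-γ)) • massFormMeasure γ Θ) ∧
    ∀ p : ℝ × E, p.1 ∈ Ico 0 1 → 0 ≤ p.2 →
      MonotoneOn (fun x : ℝ => x • massGrowth x p) (Ioi 0) ∧
      ∀ x ∈ Ioc (0 : ℝ) 1, x • massGrowth x p ≤ p :=
  ⟨fun _ hx => map_massGrowth_massFormMeasure γ Θ hx, fun _ hp₁ hp₂ =>
    ⟨monotoneOn_smul_massGrowth hp₁ hp₂, fun _ hx => smul_massGrowth_le hx hp₁ hp₂⟩⟩

end MassGrowth

/-- **Splitting measures of mass form `M_γ` are `G^M`-growing (quasi-preservation and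
monotonicity).**  Let `γ > 0`, `Θ` a σ-finite measure on nonnegative sequences, and `Ξ`
the pushforward of `ν_γ ⊗ Θ` under `(y₀, y) ↦ (y₀, (1 − y₀)·y)`.  With
`G^M_x(y₀, z) = (m_x(y₀), ((1 − m_x(y₀))/(1 − y₀))·z)`:
(i) `(G^M_x)_♯ Ξ = x^{−γ}·Ξ` for every `x > 0`; (ii) `x ↦ x·G^M_x(y₀, z)` is
coordinate-wise nondecreasing on `(0,∞)`, and `x·G^M_x(y₀, z) ≤ (y₀, z)` for `x ∈ (0,1]`. -/
theorem massForm_is_GM_growing (γ : ℝ) (hγ : 0 < γ)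
    (Θ : Measure (ℕ → ℝ)) [SigmaFinite Θ]
    (hΘ : Θ {z : ℕ → ℝ | ¬ ∀ i, 0 ≤ z i} = 0)
    (Ξ : Measure (ℝ × (ℕ → ℝ)))
    (hΞ : Ξ = Measure.map (fun p : ℝ × (ℕ → ℝ) => (p.1, fun i => (1 - p.1) * p.2 i))
      ((nuGamma γ).prod Θ))
    (GM : ℝ → ℝ × (ℕ → ℝ) → ℝ × (ℕ → ℝ))
    (hGM : ∀ x : ℝ, ∀ p : ℝ × (ℕ → ℝ),
      GM x p = (magic x p.1, fun i => ((1 - magic x p.1) / (1 - p.1)) * p.2 i)) :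
    (∀ x > (0:ℝ), Measure.map (GM x) Ξ = ENNReal.ofReal (x ^ (-γ)) • Ξ) ∧
    (∀ y₀ ∈ Ico (0:ℝ) 1, ∀ z : ℕ → ℝ, (∀ i, 0 ≤ z i) →
      (MonotoneOn (fun x : ℝ => x * (GM x (y₀, z)).1) (Ioi 0) ∧
        ∀ i, MonotoneOn (fun x : ℝ => x * (GM x (y₀, z)).2 i) (Ioi 0)) ∧
      (∀ x ∈ Ioc (0:ℝ) 1,
        x * (GM x (y₀, z)).1 ≤ y₀ ∧ ∀ i, x * (GM x (y₀, z)).2 i ≤ z i)) := by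
  obtain rfl : GM = massGrowth := funext₂ hGM
  obtain rfl : Ξ = massFormMeasure γ Θ := hΞ
  obtain ⟨hmap, hgrow⟩ := massForm_is_GM_growing_general γ Θ
  refine ⟨hmap, fun y₀ hy₀ z hz => ?_⟩
  obtain ⟨hmono, hle⟩ := hgrow (y₀, z) hy₀ hz
  exact ⟨⟨fun _ ha _ hb hab => (hmono ha hb hab).1,
    fun i _ ha _ hb hab => (hmono ha hb hab).2 i⟩, hle⟩
end

section
/- For every s ∈ [1/2, 1), the maps x ↦ x·𝚏_x(s) and x ↦ x·(1 − 𝚏_x(s)) are nondecreasing on (0, ∞). In particular, for every x ∈ (0,1] and s ∈ [1/2, 1): x·𝚏_x(s) ≤ s and x·(1 − 𝚏_x(s)) ≤ 1 − s. -/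
open Set

/-- `h(s) = (1 − 2s)²/(s(1 − s))`. -/
noncomputable def hBro (s : ℝ) : ℝ := (1 - 2 * s) ^ 2 / (s * (1 - s))

/-- The locally largest growing family of the Brownian CRT (by mass):
`𝚏_x(s) = (1/2)(1 + √(h(s)/(4x⁻¹ + h(s))))`. -/
noncomputable def fBro (x s : ℝ) : ℝ :=
  (1 / 2) * (1 + Real.sqrt (hBro s / (4 * x⁻¹ + hBro s)))

/-
At fixed `s`, put `h = h(s)` and `u = 4 x⁻¹ + h`, so that `u` decreases in `x` and
`𝚏_x(s) = (1 + √(h / u)) / 2`. Hence `𝚏_x(s)` increases in `x`, and so does `x 𝚏_x(s)`. In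
`x (1 - 𝚏_x(s))` the two factors compete, but multiplying by the conjugate of `1 - √(h / u)`
turns the product into `2 / (u + √(h u))`, where `x` enters through `u` alone. The bounds for
`x ≤ 1` are the comparison with `x = 1`, where `h / (4 + h) = (1 - 2s)²` is a perfect square.
-/

lemma one_sub_sqrt_div {a b : ℝ} (ha : 0 ≤ a) (hb : 0 < b) :
    1 - √(a / b) = (b - a) / (b + √(a * b)) := by
  have sqrt_mul_eq : √(a * b) = b * √(a / b) := by
    have mul_eq : a * b = b ^ 2 * (a / b) := by field_simp
    rw [mul_eq, Real.sqrt_mul (sq_nonneg b), Real.sqrt_sq hb.le]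
  have sq_eq : b * √(a / b) ^ 2 = a := by
    rw [Real.sq_sqrt (by positivity), mul_div_cancel₀ a hb.ne']
  rw [eq_div_iff (by positivity), sqrt_mul_eq]
  linear_combination -sq_eq

lemma hBro_nonneg {s : ℝ} (hs : s ∈ Icc (0 : ℝ) 1) : 0 ≤ hBro s :=
  div_nonneg (sq_nonneg _) (mul_nonneg hs.1 (sub_nonneg.2 hs.2))

lemma hBro_div_four_add_hBro {s : ℝ} (hs : s ∈ Ioo (0 : ℝ) 1) :
    hBro s / (4 + hBro s) = (1 - 2 * s) ^ 2 := by
  have s_ne : s ≠ 0 := hs.1.ne'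
  have one_sub_s_ne : 1 - s ≠ 0 := (sub_pos.2 hs.2).ne'
  have four_add : 4 + hBro s = 1 / (s * (1 - s)) := by
    unfold hBro
    field_simp
    ring
  rw [four_add, hBro]
  field_simp

lemma fBro_one {s : ℝ} (hs : s ∈ Ioo (0 : ℝ) 1) : fBro 1 s = max s (1 - s) := by
  rw [fBro, inv_one, mul_one, hBro_div_four_add_hBro hs, Real.sqrt_sq_eq_abs,
    sup_eq_half_smul_add_add_abs_sub' ℝ, smul_eq_mul]
  ring_nf

lemma fBro_nonneg (x s : ℝ) : 0 ≤ fBro x s := by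
  unfold fBro
  positivity

lemma monotoneOn_fBro {s : ℝ} (hs : s ∈ Ioo (0 : ℝ) 1) :
    MonotoneOn (fun x => fBro x s) (Ioi 0) := by
  intro x (hx : 0 < x) y (hy : 0 < y) hxy
  have h_nonneg := hBro_nonneg (Ioo_subset_Icc_self hs)
  change fBro x s ≤ fBro y s
  unfold fBro
  gcongr

lemma monotoneOn_mul_fBro {s : ℝ} (hs : s ∈ Ioo (0 : ℝ) 1) :
    MonotoneOn (fun x => x * fBro x s) (Ioi 0) :=
  monotoneOn_id.mul (monotoneOn_fBro hs) (fun _ hx => le_of_lt hx) fun x _ => fBro_nonneg x s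

lemma mul_one_sub_fBro {x s : ℝ} (hx : 0 < x) (hs : s ∈ Ioo (0 : ℝ) 1) :
    x * (1 - fBro x s) = 2 / (4 * x⁻¹ + hBro s + √(hBro s * (4 * x⁻¹ + hBro s))) := by
  have h_nonneg := hBro_nonneg (Ioo_subset_Icc_self hs)
  have conj := one_sub_sqrt_div h_nonneg (b := 4 * x⁻¹ + hBro s) (by positivity)
  calc x * (1 - fBro x s) = x / 2 * (1 - √(hBro s / (4 * x⁻¹ + hBro s))) := by
        rw [fBro]
        ring
    _ = 2 * (x * x⁻¹) / (4 * x⁻¹ + hBro s + √(hBro s * (4 * x⁻¹ + hBro s))) := by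
        rw [conj]
        ring
    _ = 2 / (4 * x⁻¹ + hBro s + √(hBro s * (4 * x⁻¹ + hBro s))) := by
        rw [mul_inv_cancel₀ hx.ne', mul_one]

lemma monotoneOn_mul_one_sub_fBro {s : ℝ} (hs : s ∈ Ioo (0 : ℝ) 1) :
    MonotoneOn (fun x => x * (1 - fBro x s)) (Ioi 0) := by
  intro x (hx : 0 < x) y (hy : 0 < y) hxy
  have h_nonneg := hBro_nonneg (Ioo_subset_Icc_self hs)
  simp only [mul_one_sub_fBro hx hs, mul_one_sub_fBro hy hs]
  gcongr

theorem fBro_monotone_general :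
    (∀ s ∈ Ioo (0 : ℝ) 1,
      MonotoneOn (fun x => x * fBro x s) (Ioi 0) ∧
      MonotoneOn (fun x => x * (1 - fBro x s)) (Ioi 0)) ∧
    (∀ x ∈ Ioc (0 : ℝ) 1, ∀ s ∈ Ioo (0 : ℝ) 1,
      x * fBro x s ≤ max s (1 - s) ∧ x * (1 - fBro x s) ≤ min s (1 - s)) := by
  refine ⟨fun s hs => ⟨monotoneOn_mul_fBro hs, monotoneOn_mul_one_sub_fBro hs⟩,
    fun x hx s hs => ⟨?_, ?_⟩⟩
  · simpa only [one_mul, fBro_one hs] using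
      monotoneOn_mul_fBro hs hx.1 (mem_Ioi.2 one_pos) hx.2
  · have one_sub_max : 1 - max s (1 - s) = min s (1 - s) := by
      linarith [min_add_max s (1 - s)]
    simpa only [one_mul, fBro_one hs, one_sub_max] using
      monotoneOn_mul_one_sub_fBro hs hx.1 (mem_Ioi.2 one_pos) hx.2

/-- **Monotone coupling (growing) property of the Brownian CRT family.**  For every
`s ∈ [1/2, 1)` the maps `x ↦ x·𝚏_x(s)` and `x ↦ x·(1 − 𝚏_x(s))` are nondecreasing on
`(0,∞)`; in particular `x·𝚏_x(s) ≤ s` and `x·(1 − 𝚏_x(s)) ≤ 1 − s` for `x ∈ (0,1]`. -/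
theorem fBro_monotone :
    (∀ s ∈ Ico ((1:ℝ)/2) 1,
      MonotoneOn (fun x => x * fBro x s) (Ioi 0) ∧
      MonotoneOn (fun x => x * (1 - fBro x s)) (Ioi 0)) ∧
    (∀ x ∈ Ioc (0:ℝ) 1, ∀ s ∈ Ico ((1:ℝ)/2) 1,
      x * fBro x s ≤ s ∧ x * (1 - fBro x s) ≤ 1 - s) := by
  have mem_Ioo {s : ℝ} (hs : s ∈ Ico ((1:ℝ)/2) 1) : s ∈ Ioo (0 : ℝ) 1 :=
    ⟨one_half_pos.trans_le hs.1, hs.2⟩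
  refine ⟨fun s hs => fBro_monotone_general.1 s (mem_Ioo hs), fun x hx s hs => ?_⟩
  have one_sub_le : 1 - s ≤ s := by linarith [hs.1]
  simpa only [max_eq_left one_sub_le, min_eq_right one_sub_le] using
    fBro_monotone_general.2 x hx s (mem_Ioo hs)
end
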